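/- Let f : ℝ^d → ℝ be a convex function of at most linear growth, S an invertible d × d real matrix, and Q(x) the matrix of Radon–Nikodym derivatives of the absolutely continuous parts of the second derivative measures of f. Then for Lebesgue-almost every x ∈ ℝ^d: lim_{t → 0⁺} (1/t)(∫_{ℝ^d} f(x + S y) φ_t(y) dy − f(x)) = (1/2) tr(Sᵀ Q(x) S), where φ_t(y) = (2πt)^{−d/2} exp(−‖y‖²/(2t)). -/

import Mathlib

open MeasureTheory Filter Metric
open scoped Topology ENNReal NNReal

/-- The `d`-dimensional Gaussian heat kernel `φ_t`. -/
noncomputable def heatKernel (d : ℕ) (t : ℝ) (y : EuclideanSpace ℝ (Fin d)) : ℝ :=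
  (2 * Real.pi * t) ^ (-(d : ℝ) / 2) * Real.exp (-‖y‖ ^ 2 / (2 * t))

/-- The second partial derivative `∂_i ∂_j φ` at `x`. -/
noncomputable def secondPartial (d : ℕ) (φ : EuclideanSpace ℝ (Fin d) → ℝ)
    (i j : Fin d) (x : EuclideanSpace ℝ (Fin d)) : ℝ :=
  fderiv ℝ (fun z => fderiv ℝ φ z (EuclideanSpace.single j 1)) x (EuclideanSpace.single i 1)

/-- `μp, μn` represent the (signed) second derivative measures `μ_{ij} = μp i j - μn i j`
of the function `g`. -/
def IsSecondDerivMeasures (d : ℕ) (g : EuclideanSpace ℝ (Fin d) → ℝ)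
    (μp μn : Fin d → Fin d → Measure (EuclideanSpace ℝ (Fin d))) : Prop :=
  (∀ i j, IsLocallyFiniteMeasure (μp i j)) ∧ (∀ i j, IsLocallyFiniteMeasure (μn i j)) ∧
  ∀ i j, ∀ φ : EuclideanSpace ℝ (Fin d) → ℝ, ContDiff ℝ (⊤ : ℕ∞) φ → HasCompactSupport φ →
    (∫ x, φ x ∂(μp i j)) - (∫ x, φ x ∂(μn i j)) = ∫ x, g x * secondPartial d φ i j x

/-- The matrix of Radon–Nikodym derivatives of the absolutely continuous parts of the
second derivative measures. -/
noncomputable def densityMatrix (d : ℕ)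
    (μp μn : Fin d → Fin d → Measure (EuclideanSpace ℝ (Fin d)))
    (x : EuclideanSpace ℝ (Fin d)) : Matrix (Fin d) (Fin d) ℝ :=
  Matrix.of fun i j =>
    ((μp i j).rnDeriv volume x).toReal - ((μn i j).rnDeriv volume x).toReal

lemma lintegral_comp_sub_le_of_antitone {α : Type*} [MeasurableSpace α] {ν₁ ν₂ : Measure α}
    {N : α → ℝ} (hN : Measurable N) (hN0 : ∀ a, 0 ≤ N a) {k : ℝ → ℝ} (hk : Antitone k)
    (hkc : Continuous k) {δ : ℝ}
    (h : ∀ r, 0 < r → r < δ → ν₁ {a | N a ≤ r} ≤ ν₂ {a | N a ≤ r}) :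
    ∫⁻ a, ENNReal.ofReal (max (k (N a) - k δ) 0) ∂ν₁ ≤
      ∫⁻ a, ENNReal.ofReal (max (k (N a) - k δ) 0) ∂ν₂ := by
  have hmeas : Measurable fun a => max (k (N a) - k δ) 0 :=
    ((hkc.measurable.comp hN).sub_const _).max measurable_const
  have hnn (ν : Measure α) : 0 ≤ᵐ[ν] fun a => max (k (N a) - k δ) 0 :=
    .of_forall fun a => le_max_right _ _
  rw [lintegral_eq_lintegral_meas_lt ν₁ (hnn _) hmeas.aemeasurable,
    lintegral_eq_lintegral_meas_lt ν₂ (hnn _) hmeas.aemeasurable]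
  refine setLIntegral_mono' measurableSet_Ioi fun l hl => ?_
  have hl : 0 < l := hl
  have hset : {a | l < max (k (N a) - k δ) 0} =
      ⋃ q : {q : ℚ // 0 < (q : ℝ) ∧ l < k q - k δ}, {a | N a ≤ ((q : ℚ) : ℝ)} := by
    ext a
    simp only [Set.mem_ofPred_eq, Set.mem_iUnion, lt_max_iff, hl.not_gt, or_false]
    constructor
    · intro ha
      have hopen : IsOpen {r | l < k r - k δ} :=
        isOpen_lt continuous_const (hkc.sub continuous_const)
      have hev : ∀ᶠ r in 𝓝[>] (N a), l < k r - k δ :=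
        nhdsWithin_le_nhds (hopen.mem_nhds ha)
      obtain ⟨u, hu, hsub⟩ := mem_nhdsGT_iff_exists_Ioo_subset.1 hev
      obtain ⟨q, hq1, hq2⟩ := exists_rat_btwn (show N a < u from hu)
      exact ⟨⟨q, (hN0 a).trans_lt hq1, hsub ⟨hq1, hq2⟩⟩, hq1.le⟩
    · rintro ⟨⟨q, hq0, hq⟩, hqa⟩
      have := hk hqa
      simp only at this
      linarith
  rw [hset]
  have hdir : Directed (· ⊆ ·)
      fun q : {q : ℚ // 0 < (q : ℝ) ∧ l < k q - k δ} => {a | N a ≤ ((q : ℚ) : ℝ)} := by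
    refine Monotone.directed_le fun p q hpq a (ha : N a ≤ _) => ?_
    exact ha.trans (by exact_mod_cast hpq)
  rw [hdir.measure_iUnion, hdir.measure_iUnion]
  refine iSup_mono fun q => h _ q.2.1 ?_
  by_contra! hle
  have := hk hle
  linarith [q.2.2]

lemma integral_comp_sub_le_of_antitone {α : Type*} [MeasurableSpace α] {ν₁ ν₂ : Measure α}
    {N : α → ℝ} (hN : Measurable N) (hN0 : ∀ a, 0 ≤ N a) {k : ℝ → ℝ} (hk : Antitone k)
    (hkc : Continuous k) {δ c₁ c₂ : ℝ} (hc₁ : 0 ≤ c₁) (hc₂ : 0 ≤ c₂)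
    (h : ∀ r, 0 < r → r < δ →
      ENNReal.ofReal c₁ * ν₁ {a | N a ≤ r} ≤ ENNReal.ofReal c₂ * ν₂ {a | N a ≤ r})
    (hint : Integrable (fun a => max (k (N a) - k δ) 0) ν₂) :
    c₁ * ∫ a, max (k (N a) - k δ) 0 ∂ν₁ ≤ c₂ * ∫ a, max (k (N a) - k δ) 0 ∂ν₂ := by
  have hmeas : Measurable fun a => max (k (N a) - k δ) 0 :=
    ((hkc.measurable.comp hN).sub_const _).max measurable_const
  have key := lintegral_comp_sub_le_of_antitone (ν₁ := ENNReal.ofReal c₁ • ν₁)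
    (ν₂ := ENNReal.ofReal c₂ • ν₂) hN hN0 hk hkc (δ := δ) (by simpa using h)
  rw [lintegral_smul_measure, lintegral_smul_measure, smul_eq_mul, smul_eq_mul] at key
  have hnn (ν : Measure α) : 0 ≤ᵐ[ν] fun a => max (k (N a) - k δ) 0 :=
    .of_forall fun a => le_max_right _ _
  rw [integral_eq_lintegral_of_nonneg_ae (hnn _) hmeas.aestronglyMeasurable,
    integral_eq_lintegral_of_nonneg_ae (hnn _) hmeas.aestronglyMeasurable]
  have hfin : ∫⁻ a, ENNReal.ofReal (max (k (N a) - k δ) 0) ∂ν₂ ≠ ⊤ := hint.lintegral_lt_top.ne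
  have := ENNReal.toReal_mono (ENNReal.mul_ne_top ENNReal.ofReal_ne_top hfin) key
  simpa [ENNReal.toReal_mul, ENNReal.toReal_ofReal, hc₁, hc₂] using this

lemma integrable_comp_of_antitone_of_eq_zero {α : Type*} [MeasurableSpace α] {ν : Measure α}
    {N : α → ℝ} (hN : Measurable N) (hN0 : ∀ a, 0 ≤ N a) {k : ℝ → ℝ} (hk : Antitone k)
    (hk0 : ∀ u, 0 ≤ k u) {R : ℝ} (hkR : ∀ u, R < u → k u = 0) (hν : ν {a | N a ≤ R} ≠ ⊤) :
    Integrable (fun a => k (N a)) ν := by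
  have hmeas : MeasurableSet {a | N a ≤ R} := measurableSet_le hN measurable_const
  have h1 : IntegrableOn (fun a => k (N a)) {a | N a ≤ R} ν := by
    refine Measure.integrableOn_of_bounded hν (hk.measurable.comp hN).aestronglyMeasurable
      (M := k 0) (.of_forall fun a => ?_)
    rw [Real.norm_of_nonneg (hk0 _)]
    exact hk (hN0 a)
  refine (integrableOn_iff_integrable_of_support_subset fun a ha => ?_).1 h1
  by_contra hlt
  exact ha (hkR _ (not_le.1 hlt))

/-- Averages against a family of decreasing profiles that concentrate at the origin have the
same limit as the averages over sublevel sets. -/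
lemma tendsto_integral_antitone_of_tendsto_ratio {α : Type*} [MeasurableSpace α]
    {μ ν : Measure α} {N : α → ℝ} (hN : Measurable N) (hN0 : ∀ a, 0 ≤ N a) {R : ℝ} (hR : 0 < R)
    (hμ : μ {a | N a ≤ R} ≠ ⊤) (hν : ν {a | N a ≤ R} ≠ ⊤)
    (hνpos : ∀ r, 0 < r → ν {a | N a ≤ r} ≠ 0) {q : ℝ≥0∞} (hq : q ≠ ⊤)
    (hlim : Tendsto (fun r => μ {a | N a ≤ r} / ν {a | N a ≤ r}) (𝓝[>] (0 : ℝ)) (𝓝 q))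
    {k : ℝ → ℝ → ℝ} (hk : ∀ s, 0 < s → Antitone (k s)) (hkc : ∀ s, 0 < s → Continuous (k s))
    (hk0 : ∀ s, 0 < s → ∀ u, 0 ≤ k s u) (hkR : ∀ s, 0 < s → ∀ u, R < u → k s u = 0)
    (hkδ : ∀ δ, 0 < δ → Tendsto (fun s => k s δ) (𝓝[>] 0) (𝓝 0)) {c : ℝ}
    (hc : Tendsto (fun s => ∫ a, k s (N a) ∂ν) (𝓝[>] 0) (𝓝 c)) :
    Tendsto (fun s => ∫ a, k s (N a) ∂μ) (𝓝[>] 0) (𝓝 (q.toReal * c)) := by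
  have hpos : ∀ᶠ s : ℝ in 𝓝[>] 0, 0 < s := self_mem_nhdsWithin
  have hc0 : 0 ≤ c := ge_of_tendsto hc (by
    filter_upwards [hpos] with s hs using integral_nonneg fun a => hk0 s hs _)
  have hq' : q = ENNReal.ofReal q.toReal := (ENNReal.ofReal_toReal hq).symm
  have hq0 : 0 ≤ q.toReal := ENNReal.toReal_nonneg
  -- integrability and truncation estimates, valid for both measures
  have trunc : ∀ ρ : Measure α, ρ {a | N a ≤ R} ≠ ⊤ → ∀ s, 0 < s → ∀ δ,
      Integrable (fun a => max (k s (N a) - k s δ) 0) ρ ∧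
      ∫ a, max (k s (N a) - k s δ) 0 ∂ρ ≤ ∫ a, k s (N a) ∂ρ ∧
      ∫ a, k s (N a) ∂ρ ≤
        ∫ a, max (k s (N a) - k s δ) 0 ∂ρ + k s δ * (ρ {a | N a ≤ R}).toReal := by
    intro ρ hρ s hs δ
    have hmeas : MeasurableSet {a | N a ≤ R} := measurableSet_le hN measurable_const
    have i1 := integrable_comp_of_antitone_of_eq_zero hN hN0 (hk s hs) (hk0 s hs) (hkR s hs) hρ
    have i2 : Integrable (fun a => max (k s (N a) - k s δ) 0) ρ :=
      integrable_comp_of_antitone_of_eq_zero (k := fun u => max (k s u - k s δ) 0) hN hN0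
        (fun u v huv => max_le_max (sub_le_sub_right (hk s hs huv) _) le_rfl)
        (fun u => le_max_right _ _)
        (fun u hu => by
          have := hk0 s hs δ
          simp [hkR s hs u hu, this]) hρ
    have i3 : Integrable ({a | N a ≤ R}.indicator fun _ => k s δ) ρ :=
      (integrable_indicator_iff hmeas).2 (integrableOn_const hρ)
    refine ⟨i2, integral_mono i2 i1 fun a => ?_, ?_⟩
    · have := hk0 s hs δ
      have := hk0 s hs (N a)
      simp only [max_le_iff]
      constructor <;> linarith
    · have hind : ∫ a, ({a | N a ≤ R}.indicator fun _ => k s δ) a ∂ρ =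
          k s δ * (ρ {a | N a ≤ R}).toReal := by
        rw [integral_indicator_const _ hmeas]
        simp [Measure.real, mul_comm]
      rw [← hind, ← integral_add i2 i3]
      refine integral_mono i1 (i2.add i3) fun a => ?_
      by_cases ha : N a ≤ R
      · simp only [Set.indicator, Set.mem_ofPred_eq, ha, if_true]
        linarith [le_max_left (k s (N a) - k s δ) 0]
      · simp only [Set.indicator, Set.mem_ofPred_eq, ha, if_false]
        rw [hkR s hs _ (not_le.1 ha), add_zero]
        exact le_max_right _ _
  have hνfin : ∀ r, r ≤ R → ν {a | N a ≤ r} ≠ ⊤ := fun r hr =>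
    ne_top_of_le_ne_top hν (measure_mono fun a (ha : N a ≤ r) => ha.trans hr)
  have exists_delta : ∀ P : ℝ → Prop, (∀ᶠ r in 𝓝[>] (0 : ℝ), P r) →
      ∃ δ, 0 < δ ∧ δ ≤ R ∧ ∀ r, 0 < r → r < δ → P r := by
    intro P hP
    obtain ⟨u, hu, hsub⟩ := mem_nhdsGT_iff_exists_Ioo_subset.1 hP
    refine ⟨min u R, lt_min hu hR, min_le_right _ _, fun r h0 hr => ?_⟩
    exact hsub ⟨h0, hr.trans_le (min_le_left _ _)⟩
  refine tendsto_order.2 ⟨fun b hb => ?_, fun b hb => ?_⟩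
  · obtain ⟨ε, hε, hεb⟩ : ∃ ε, 0 < ε ∧ b < max (q.toReal - ε) 0 * c := by
      refine ⟨(q.toReal * c - b) / (2 * (c + 1)), by
        have : 0 < q.toReal * c - b := by linarith
        positivity, ?_⟩
      refine lt_of_lt_of_le ?_ (mul_le_mul_of_nonneg_right (le_max_left _ _) hc0)
      have h1 : (q.toReal * c - b) / (2 * (c + 1)) * c < q.toReal * c - b := by
        rw [div_mul_eq_mul_div, div_lt_iff₀ (by positivity)]
        nlinarith
      linarith
    have hev : ∀ᶠ r in 𝓝[>] (0 : ℝ), r ≤ R →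
        ENNReal.ofReal (max (q.toReal - ε) 0) * ν {a | N a ≤ r} ≤
          ENNReal.ofReal 1 * μ {a | N a ≤ r} := by
      rcases le_or_gt (q.toReal - ε) 0 with hle | hlt
      · simp [max_eq_right hle]
      · have : ENNReal.ofReal (q.toReal - ε) < q := by
          conv_rhs => rw [hq']
          exact (ENNReal.ofReal_lt_ofReal_iff (by linarith)).2 (by linarith)
        filter_upwards [hlim.eventually (lt_mem_nhds this), self_mem_nhdsWithin] with r hr h0 hrR
        rw [max_eq_left hlt.le, ENNReal.ofReal_one, one_mul]
        exact (ENNReal.le_div_iff_mul_le (.inl (hνpos r h0)) (.inl (hνfin r hrR))).1 hr.le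
    obtain ⟨δ, hδ, hδR, hδP⟩ := exists_delta _ hev
    have hl : Tendsto (fun s => max (q.toReal - ε) 0 *
        (∫ a, k s (N a) ∂ν - k s δ * (ν {a | N a ≤ R}).toReal)) (𝓝[>] 0)
        (𝓝 (max (q.toReal - ε) 0 * (c - 0 * (ν {a | N a ≤ R}).toReal))) :=
      (hc.sub ((hkδ δ hδ).mul_const _)).const_mul _
    rw [zero_mul, sub_zero] at hl
    filter_upwards [hl.eventually (lt_mem_nhds hεb), hpos] with s hs hs0
    refine hs.trans_le ?_
    obtain ⟨a1, a2, a3⟩ := trunc μ hμ s hs0 δ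
    obtain ⟨b1, b2, b3⟩ := trunc ν hν s hs0 δ
    have := integral_comp_sub_le_of_antitone (ν₁ := ν) (ν₂ := μ) hN hN0 (hk s hs0) (hkc s hs0)
      (le_max_right (q.toReal - ε) 0) zero_le_one
      (fun r h0 hr => hδP r h0 hr (hr.le.trans hδR)) a1
    calc _ ≤ max (q.toReal - ε) 0 * ∫ a, max (k s (N a) - k s δ) 0 ∂ν :=
          mul_le_mul_of_nonneg_left (by linarith) (le_max_right _ _)
      _ ≤ _ := by linarith
  · obtain ⟨ε, hε, hεb⟩ : ∃ ε, 0 < ε ∧ (q.toReal + ε) * c < b := by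
      refine ⟨(b - q.toReal * c) / (2 * (c + 1)), by
        have : 0 < b - q.toReal * c := by linarith
        positivity, ?_⟩
      have h1 : (b - q.toReal * c) / (2 * (c + 1)) * c < b - q.toReal * c := by
        rw [div_mul_eq_mul_div, div_lt_iff₀ (by positivity)]
        nlinarith
      linarith
    have hev : ∀ᶠ r in 𝓝[>] (0 : ℝ), r ≤ R →
        ENNReal.ofReal 1 * μ {a | N a ≤ r} ≤
          ENNReal.ofReal (q.toReal + ε) * ν {a | N a ≤ r} := by
      have : q < ENNReal.ofReal (q.toReal + ε) := by
        conv_lhs => rw [hq']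
        exact (ENNReal.ofReal_lt_ofReal_iff (by linarith)).2 (by linarith)
      filter_upwards [hlim.eventually (gt_mem_nhds this), self_mem_nhdsWithin] with r hr h0 hrR
      rw [ENNReal.ofReal_one, one_mul]
      exact (ENNReal.div_le_iff_le_mul (.inl (hνpos r h0)) (.inl (hνfin r hrR))).1 hr.le
    obtain ⟨δ, hδ, hδR, hδP⟩ := exists_delta _ hev
    have hl : Tendsto (fun s => (q.toReal + ε) * ∫ a, k s (N a) ∂ν +
        k s δ * (μ {a | N a ≤ R}).toReal) (𝓝[>] 0)
        (𝓝 ((q.toReal + ε) * c + 0 * (μ {a | N a ≤ R}).toReal)) :=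
      (hc.const_mul _).add ((hkδ δ hδ).mul_const _)
    rw [zero_mul, add_zero] at hl
    filter_upwards [hl.eventually (gt_mem_nhds hεb), hpos] with s hs hs0
    refine lt_of_le_of_lt ?_ hs
    obtain ⟨a1, a2, a3⟩ := trunc μ hμ s hs0 δ
    obtain ⟨b1, b2, b3⟩ := trunc ν hν s hs0 δ
    have := integral_comp_sub_le_of_antitone (ν₁ := μ) (ν₂ := ν) hN hN0 (hk s hs0) (hkc s hs0)
      zero_le_one (by positivity : 0 ≤ q.toReal + ε)
      (fun r h0 hr => hδP r h0 hr (hr.le.trans hδR)) b1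
    have h2 : (q.toReal + ε) * ∫ a, max (k s (N a) - k s δ) 0 ∂ν ≤
        (q.toReal + ε) * ∫ a, k s (N a) ∂ν :=
      mul_le_mul_of_nonneg_left b2 (by positivity)
    linarith

/-- Differentiation of measures along ellipsoids. -/
lemma ae_tendsto_rnDeriv_ellipsoid {E : Type*} [NormedAddCommGroup E] [NormedSpace ℝ E]
    [FiniteDimensional ℝ E] [MeasurableSpace E] [BorelSpace E] (m : Measure E) [m.IsAddHaarMeasure]
    (L : E ≃L[ℝ] E) (μ : Measure E) [IsLocallyFiniteMeasure μ] :
    ∀ᵐ x ∂m, Tendsto (fun r => μ {z | ‖L.symm (z - x)‖ ^ 2 ≤ r} / m {z | ‖L.symm (z - x)‖ ^ 2 ≤ r})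
      (𝓝[>] (0 : ℝ)) (𝓝 (μ.rnDeriv m x)) := by
  set n := Module.finrank ℝ E
  set M : ℝ := ‖(L : E →L[ℝ] E)‖
  set D : ℝ := |LinearMap.det (L : E →ₗ[ℝ] E)|
  have hD : 0 < D := abs_pos.2 (LinearEquiv.isUnit_det' L.toLinearEquiv).ne_zero
  have hM : 0 ≤ M := norm_nonneg _
  set C : ℝ≥0 := Real.toNNReal (3 ^ n + (3 * M) ^ n / D)
  have hC : (C : ℝ≥0∞) = ENNReal.ofReal (3 ^ n + (3 * M) ^ n / D) := rfl
  have h : ∀ x, ∃ᶠ r in 𝓝[>] 0, m (closedBall x (3 * r)) ≤ C * m (closedBall x r) := by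
    intro x
    refine Eventually.frequently ?_
    filter_upwards [self_mem_nhdsWithin] with r (hr : 0 < r)
    rw [m.addHaar_closedBall x (by positivity), m.addHaar_closedBall x hr.le, ← mul_assoc, hC,
      ← ENNReal.ofReal_mul (by positivity)]
    gcongr
    rw [mul_pow]
    gcongr
    exact le_add_of_nonneg_right (by positivity)
  filter_upwards [(Vitali.vitaliFamily m C h).ae_tendsto_rnDeriv μ] with x hx
  refine hx.comp ?_
  have hset : ∀ r : ℝ, 0 ≤ r → {z | ‖L.symm (z - x)‖ ^ 2 ≤ r} =
      (fun z => x + z) '' (L '' closedBall 0 (√r)) := by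
    intro r hr
    ext z
    simp only [Set.mem_ofPred_eq, Set.image_image, Set.mem_image, mem_closedBall, dist_zero_right]
    constructor
    · intro hz
      exact ⟨L.symm (z - x), Real.le_sqrt_of_sq_le hz, by simp⟩
    · rintro ⟨y, hy, rfl⟩
      simpa using (Real.le_sqrt (norm_nonneg _) hr).1 hy
  have hsub : ∀ r : ℝ, 0 < r → {z | ‖L.symm (z - x)‖ ^ 2 ≤ r} ⊆ closedBall x (M * √r) := by
    intro r hr z hz
    have h1 : ‖L.symm (z - x)‖ ≤ √r := Real.le_sqrt_of_sq_le hz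
    rw [mem_closedBall, dist_eq_norm]
    calc ‖z - x‖ = ‖(L : E →L[ℝ] E) (L.symm (z - x))‖ := by simp
      _ ≤ M * ‖L.symm (z - x)‖ := (L : E →L[ℝ] E).le_opNorm _
      _ ≤ M * √r := by gcongr
  rw [VitaliFamily.tendsto_filterAt_iff]
  constructor
  · filter_upwards [self_mem_nhdsWithin] with r (hr : 0 < r)
    refine ⟨isClosed_le (by fun_prop) continuous_const, ⟨x, ?_⟩, M * √r, hsub r hr, ?_⟩
    · refine mem_interior.2 ⟨{z | ‖L.symm (z - x)‖ ^ 2 < r}, fun z (hz : _ < r) => hz.le,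
        isOpen_lt (by fun_prop) continuous_const, by simpa using hr⟩
    · rw [hset r hr.le, Set.image_add_left, measure_preimage_add,
        Measure.addHaar_image_continuousLinearEquiv, m.addHaar_closedBall _ (by positivity),
        m.addHaar_closedBall _ (by positivity), ← mul_assoc, ← mul_assoc, ← mul_assoc, hC,
        ← ENNReal.ofReal_mul (by positivity), ← ENNReal.ofReal_mul (by positivity)]
      gcongr
      rw [mul_pow]
      gcongr
      change _ ≤ (3 ^ n + (3 * M) ^ n / D) * D
      rw [add_mul, div_mul_cancel₀ _ hD.ne']
      exact le_add_of_nonneg_left (by positivity)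
  · intro ε hε
    have ht : Tendsto (fun r : ℝ => M * √r) (𝓝[>] 0) (𝓝 0) := by
      have : Tendsto (fun r : ℝ => M * √r) (𝓝 0) (𝓝 (M * √0)) := by
        apply Continuous.tendsto; fun_prop
      simpa using this.mono_left nhdsWithin_le_nhds
    filter_upwards [self_mem_nhdsWithin, ht.eventually (gt_mem_nhds hε)] with r hr hr2
    exact (hsub r hr).trans (closedBall_subset_closedBall hr2.le)

/-- The Gaussian heat kernel at time `s` as a function of `u = ‖y‖ ^ 2`. -/
noncomputable def gaussianProfile (d : ℕ) (s u : ℝ) : ℝ :=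
  (2 * Real.pi * s) ^ (-(d : ℝ) / 2) * Real.exp (-u / (2 * s))

/-- A smooth decreasing cutoff, equal to `1` on `(-∞, 1]` and to `0` on `[2, ∞)`. -/
noncomputable def radialCutoff (u : ℝ) : ℝ := Real.smoothTransition (2 - u)

/-- The Laplacian of `y ↦ F (‖y‖ ^ 2)` on `ℝ^d`, as a function of `u = ‖y‖ ^ 2`. -/
noncomputable def radialLaplacian (d : ℕ) (F : ℝ → ℝ) (u : ℝ) : ℝ :=
  4 * u * deriv (deriv F) u + 2 * d * deriv F u

section Radial

variable {d : ℕ}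

lemma hasFDerivAt_norm_sq_comp {E : Type*} [NormedAddCommGroup E] [InnerProductSpace ℝ E]
    (T : E →L[ℝ] E) (x z : E) :
    HasFDerivAt (fun z => ‖T (z - x)‖ ^ 2) (2 • (innerSL ℝ (T (z - x))).comp T) z := by
  have h1 : HasFDerivAt (fun z => T (z - x)) T z :=
    T.hasFDerivAt.comp z ((hasFDerivAt_id z).sub_const x)
  exact h1.norm_sq

lemma secondPartial_radial {F : ℝ → ℝ} (hF : ContDiff ℝ (⊤ : ℕ∞) F)
    (T : EuclideanSpace ℝ (Fin d) →L[ℝ] EuclideanSpace ℝ (Fin d))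
    (x z : EuclideanSpace ℝ (Fin d)) (i j : Fin d) :
    secondPartial d (fun z => F (‖T (z - x)‖ ^ 2)) i j z =
      4 * deriv (deriv F) (‖T (z - x)‖ ^ 2) *
        (inner ℝ (T (z - x)) (T (EuclideanSpace.single i 1)) *
          inner ℝ (T (z - x)) (T (EuclideanSpace.single j 1))) +
      2 * deriv F (‖T (z - x)‖ ^ 2) *
        inner ℝ (T (EuclideanSpace.single i 1)) (T (EuclideanSpace.single j 1)) := by
  have hF' : ContDiff ℝ (⊤ : ℕ∞) (deriv F) := (contDiff_infty_iff_deriv.1 hF).2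
  have hd : ∀ y, HasDerivAt F (deriv F y) y := fun y =>
    ((contDiff_infty_iff_deriv.1 hF).1 y).hasDerivAt
  have hd' : ∀ y, HasDerivAt (deriv F) (deriv (deriv F) y) y := fun y =>
    ((contDiff_infty_iff_deriv.1 hF').1 y).hasDerivAt
  have h1 : (fun z => fderiv ℝ (fun z => F (‖T (z - x)‖ ^ 2)) z (EuclideanSpace.single j 1)) =
      fun z => deriv F (‖T (z - x)‖ ^ 2) *
        (2 * inner ℝ (T (z - x)) (T (EuclideanSpace.single j 1))) := by
    funext w
    have h : HasFDerivAt (fun z => F (‖T (z - x)‖ ^ 2)) _ w :=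
      (hd _).comp_hasFDerivAt w (hasFDerivAt_norm_sq_comp T x w)
    rw [h.fderiv]
    simp [-map_sub]
  have h2 : HasFDerivAt (fun z => 2 * inner ℝ (T (z - x)) (T (EuclideanSpace.single j 1)))
      ((2 : ℝ) • (innerSL ℝ (T (EuclideanSpace.single j 1))).comp T) z := by
    have : HasFDerivAt (fun z => T (z - x)) T z :=
      T.hasFDerivAt.comp z ((hasFDerivAt_id z).sub_const x)
    have h3 : HasFDerivAt (fun z => (2 : ℝ) • innerSL ℝ (T (EuclideanSpace.single j 1)) (T (z - x)))
        ((2 : ℝ) • (innerSL ℝ (T (EuclideanSpace.single j 1))).comp T) z :=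
      ((innerSL ℝ (T (EuclideanSpace.single j 1))).hasFDerivAt.comp z this).const_smul (2 : ℝ)
    simpa [real_inner_comm] using h3
  unfold secondPartial
  have h3 : HasFDerivAt (fun z => deriv F (‖T (z - x)‖ ^ 2)) _ z :=
    (hd' _).comp_hasFDerivAt z (hasFDerivAt_norm_sq_comp T x z)
  have h4 : HasFDerivAt (fun z => deriv F (‖T (z - x)‖ ^ 2) *
      (2 * inner ℝ (T (z - x)) (T (EuclideanSpace.single j 1)))) _ z := h3.mul h2
  rw [h1, h4.fderiv]
  simp only [add_apply, smul_apply,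
    ContinuousLinearMap.comp_apply, innerSL_apply_apply, smul_eq_mul, nsmul_eq_mul,
    real_inner_comm (T (EuclideanSpace.single i 1)) (T (EuclideanSpace.single j 1))]
  push_cast
  ring

lemma sum_mul_quadratic_add (a w t : Fin d → ℝ) (H : Fin d → Fin d → ℝ) (P R v : ℝ)
    (hw : ∑ i, a i * w i = v) (hH : ∀ i, ∑ j, a j * H i j = t i) (ht : ∑ i, a i * t i = 1) :
    ∑ i, ∑ j, a i * a j * (P * (w i * w j) + R * H i j) = P * v ^ 2 + R := by
  have h1 : ∀ i, ∑ j, a i * a j * (P * (w i * w j) + R * H i j) =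
      P * v * (a i * w i) + R * (a i * t i) := by
    intro i
    rw [← hH, ← hw, Finset.mul_sum, Finset.sum_mul, Finset.mul_sum, Finset.mul_sum,
      ← Finset.sum_add_distrib]
    exact Finset.sum_congr rfl fun j _ => by ring
  rw [Finset.sum_congr rfl fun i _ => h1 i, Finset.sum_add_distrib, ← Finset.mul_sum,
    ← Finset.mul_sum, hw, ht]
  ring

lemma sum_apply_mul_inner_symm (L : EuclideanSpace ℝ (Fin d) ≃L[ℝ] EuclideanSpace ℝ (Fin d))
    (v : EuclideanSpace ℝ (Fin d)) (k : Fin d) :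
    ∑ i, L (EuclideanSpace.single k 1) i * inner ℝ v (L.symm (EuclideanSpace.single i 1)) =
      v k := by
  have h1 : L (EuclideanSpace.single k 1) =
      ∑ i, L (EuclideanSpace.single k 1) i • EuclideanSpace.single i (1 : ℝ) := by
    conv_lhs => rw [← (EuclideanSpace.basisFun (Fin d) ℝ).sum_repr (L (EuclideanSpace.single k 1))]
    simp only [EuclideanSpace.basisFun_repr, EuclideanSpace.basisFun_apply]
  have h2 := congrArg (fun w => inner ℝ v (L.symm w)) h1
  simp only [ContinuousLinearEquiv.symm_apply_apply, map_sum, map_smul, inner_sum,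
    inner_smul_right] at h2
  rw [← h2]
  simp [EuclideanSpace.inner_single_right]

lemma sum_secondPartial_radial {F : ℝ → ℝ} (hF : ContDiff ℝ (⊤ : ℕ∞) F)
    (L : EuclideanSpace ℝ (Fin d) ≃L[ℝ] EuclideanSpace ℝ (Fin d))
    (x z : EuclideanSpace ℝ (Fin d)) :
    ∑ i, ∑ j, (∑ k, L (EuclideanSpace.single k 1) i * L (EuclideanSpace.single k 1) j) *
        secondPartial d (fun z => F (‖L.symm (z - x)‖ ^ 2)) i j z =
      radialLaplacian d F (‖L.symm (z - x)‖ ^ 2) := by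
  have step : ∀ k, ∑ i, ∑ j, L (EuclideanSpace.single k 1) i * L (EuclideanSpace.single k 1) j *
      secondPartial d (fun z => F (‖L.symm (z - x)‖ ^ 2)) i j z =
      4 * deriv (deriv F) (‖L.symm (z - x)‖ ^ 2) * (L.symm (z - x) k) ^ 2 +
        2 * deriv F (‖L.symm (z - x)‖ ^ 2) := by
    intro k
    have h1 := sum_mul_quadratic_add (fun i => L (EuclideanSpace.single k 1) i)
      (fun i => inner ℝ (L.symm (z - x)) (L.symm (EuclideanSpace.single i 1)))
      (fun i => inner ℝ (EuclideanSpace.single k (1 : ℝ)) (L.symm (EuclideanSpace.single i 1)))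
      (fun i j => inner ℝ (L.symm (EuclideanSpace.single i 1)) (L.symm (EuclideanSpace.single j 1)))
      (4 * deriv (deriv F) (‖L.symm (z - x)‖ ^ 2)) (2 * deriv F (‖L.symm (z - x)‖ ^ 2))
      (L.symm (z - x) k) (sum_apply_mul_inner_symm L _ k)
      (fun i => by
        rw [sum_apply_mul_inner_symm L _ k]
        simp [EuclideanSpace.inner_single_left])
      (by
        rw [sum_apply_mul_inner_symm L _ k]
        simp)
    rw [← h1]
    refine Finset.sum_congr rfl fun i _ => Finset.sum_congr rfl fun j _ => ?_
    have h2 := secondPartial_radial hF (L.symm : EuclideanSpace ℝ (Fin d) →L[ℝ] _) x z i j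
    simp only [ContinuousLinearEquiv.coe_coe] at h2
    rw [h2]
  have comm : ∀ t : Fin d → Fin d → Fin d → ℝ,
      ∑ i, ∑ j, ∑ k, t i j k = ∑ k, ∑ i, ∑ j, t i j k := by
    intro t
    rw [Finset.sum_comm (f := fun k i => ∑ j, t i j k)]
    exact Finset.sum_congr rfl fun i _ => Finset.sum_comm
  simp only [Finset.sum_mul]
  rw [comm, Finset.sum_congr rfl fun k _ => step k, Finset.sum_add_distrib, ← Finset.mul_sum,
    ← EuclideanSpace.real_norm_sq_eq]
  simp only [Finset.sum_const, Finset.card_univ, Fintype.card_fin, nsmul_eq_mul, radialLaplacian]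
  ring

lemma integral_comp_affine {E : Type*} [NormedAddCommGroup E] [NormedSpace ℝ E]
    [FiniteDimensional ℝ E] [MeasurableSpace E] [BorelSpace E] (m : Measure E) [m.IsAddHaarMeasure]
    (L : E ≃L[ℝ] E) (x : E) (h : E → ℝ) :
    ∫ z, h z ∂m = |LinearMap.det (L : E →ₗ[ℝ] E)| * ∫ y, h (x + L y) ∂m := by
  have hdet : LinearMap.det (L : E →ₗ[ℝ] E) ≠ 0 :=
    (LinearEquiv.isUnit_det' L.toLinearEquiv).ne_zero
  have h1 : ∫ y, h (x + L y) ∂m = ∫ z, h (x + z) ∂(m.map L) :=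
    (L.toHomeomorph.measurableEmbedding.integral_map (fun z => h (x + z))).symm
  have h2 : m.map L = _ := m.map_linearMap_addHaar_eq_smul_addHaar hdet
  rw [h1, h2, integral_smul_measure, integral_add_left_eq_self (fun z => h z) x,
    ENNReal.toReal_ofReal (abs_nonneg _), smul_eq_mul, ← mul_assoc, ← abs_mul,
    mul_inv_cancel₀ hdet, abs_one, one_mul]

end Radial

section Gaussian

variable {d : ℕ}

lemma gaussianProfile_pos {s : ℝ} (hs : 0 < s) (u : ℝ) : 0 < gaussianProfile d s u := by
  unfold gaussianProfile; positivity

lemma contDiff_gaussianProfile (s : ℝ) : ContDiff ℝ (⊤ : ℕ∞) (gaussianProfile d s) := by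
  unfold gaussianProfile
  fun_prop

lemma deriv_gaussianProfile (s : ℝ) :
    deriv (gaussianProfile d s) = fun u => -(1 / (2 * s)) * gaussianProfile d s u := by
  funext u
  have h : HasDerivAt (fun u : ℝ => -u / (2 * s)) (-1 / (2 * s)) u :=
    (hasDerivAt_id u).neg.div_const _
  have h2 : HasDerivAt (gaussianProfile d s) _ u :=
    h.exp.const_mul ((2 * Real.pi * s) ^ (-(d : ℝ) / 2))
  rw [h2.deriv, gaussianProfile]
  ring

lemma deriv_deriv_gaussianProfile (s : ℝ) :
    deriv (deriv (gaussianProfile d s)) = fun u => 1 / (4 * s ^ 2) * gaussianProfile d s u := by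
  rw [deriv_gaussianProfile]
  funext u
  rw [deriv_const_mul _ ((contDiff_gaussianProfile s).differentiable (by simp) u),
    deriv_gaussianProfile]
  ring

lemma radialLaplacian_gaussianProfile (s u : ℝ) :
    radialLaplacian d (gaussianProfile d s) u =
      gaussianProfile d s u * (u / s ^ 2 - d / s) := by
  rw [radialLaplacian, deriv_deriv_gaussianProfile, deriv_gaussianProfile]
  rcases eq_or_ne s 0 with rfl | hs
  · simp
  · field_simp
    ring

/-- The radial profile of the heat kernel solves the heat equation. -/
lemma hasDerivAt_gaussianProfile {s : ℝ} (hs : 0 < s) (u : ℝ) :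
    HasDerivAt (fun s => gaussianProfile d s u)
      (1 / 2 * radialLaplacian d (gaussianProfile d s) u) s := by
  have h1 : HasDerivAt (fun s : ℝ => 2 * Real.pi * s) (2 * Real.pi) s := by
    simpa using (hasDerivAt_id s).const_mul (2 * Real.pi)
  have h2 := h1.rpow_const (p := -(d : ℝ) / 2) (.inl (by positivity))
  have h3 : HasDerivAt (fun s : ℝ => -u / (2 * s)) (u / (2 * s ^ 2)) s := by
    have h4 : HasDerivAt (fun s : ℝ => 2 * s) 2 s := by
      simpa using (hasDerivAt_id s).const_mul (2 : ℝ)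
    have := (hasDerivAt_const s (-u)).div h4 (by positivity)
    refine this.congr_deriv ?_
    field_simp
    ring
  refine (h2.mul h3.exp).congr_deriv ?_
  rw [radialLaplacian_gaussianProfile, gaussianProfile,
    Real.rpow_sub_one (by positivity : 2 * Real.pi * s ≠ 0)]
  field_simp
  ring

lemma integrable_one_add_norm_pow_mul_exp {V : Type*} [NormedAddCommGroup V]
    [InnerProductSpace ℝ V] [FiniteDimensional ℝ V] [MeasurableSpace V] [BorelSpace V] (n : ℕ)
    {b : ℝ} (hb : 0 < b) :
    Integrable (fun y : V => (1 + ‖y‖) ^ n * Real.exp (-b * ‖y‖ ^ 2)) := by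
  have h1 : Integrable (fun y : V => Real.exp (-(b / 2) * ‖y‖ ^ 2)) := by
    by_contra h
    have h2 := GaussianFourier.integral_rexp_neg_mul_sq_norm (V := V) (half_pos hb)
    rw [integral_undef h] at h2
    exact (Real.rpow_pos_of_pos (by positivity) _).ne h2
  refine (h1.const_mul (n.factorial * Real.exp (1 + 1 / (2 * b)))).mono'
    (by fun_prop) (.of_forall fun y => ?_)
  rw [Real.norm_of_nonneg (by positivity)]
  have h3 : (1 + ‖y‖) ^ n ≤ n.factorial * Real.exp (1 + ‖y‖) := by
    have := Real.pow_div_factorial_le_exp (1 + ‖y‖) (by positivity) n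
    rwa [div_le_iff₀' (by positivity)] at this
  have h4 : ‖y‖ ≤ 1 / (2 * b) + b / 2 * ‖y‖ ^ 2 := by
    have : 1 / (2 * b) + b / 2 * ‖y‖ ^ 2 - ‖y‖ = (1 - b * ‖y‖) ^ 2 / (2 * b) := by
      field_simp
      ring
    have h5 : 0 ≤ (1 - b * ‖y‖) ^ 2 / (2 * b) := by positivity
    linarith
  calc (1 + ‖y‖) ^ n * Real.exp (-b * ‖y‖ ^ 2)
      ≤ n.factorial * Real.exp (1 + ‖y‖) * Real.exp (-b * ‖y‖ ^ 2) := by gcongr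
    _ = n.factorial * Real.exp (1 + ‖y‖ + -b * ‖y‖ ^ 2) := by rw [mul_assoc, ← Real.exp_add]
    _ ≤ n.factorial * Real.exp (1 + 1 / (2 * b) + -(b / 2) * ‖y‖ ^ 2) := by
      refine mul_le_mul_of_nonneg_left (Real.exp_le_exp.2 ?_) (by positivity)
      linarith
    _ = _ := by rw [Real.exp_add]; ring

lemma gaussianProfile_le {s₀ s₁ s u : ℝ} (hs₀ : 0 < s₀) (h₀ : s₀ ≤ s) (h₁ : s ≤ s₁) (hu : 0 ≤ u) :
    gaussianProfile d s u ≤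
      (2 * Real.pi * s₀) ^ (-(d : ℝ) / 2) * Real.exp (-(1 / (2 * s₁)) * u) := by
  have hs : 0 < s := hs₀.trans_le h₀
  have hs₁ : 0 < s₁ := hs.trans_le h₁
  unfold gaussianProfile
  have e1 : (2 * Real.pi * s) ^ (-(d : ℝ) / 2) ≤ (2 * Real.pi * s₀) ^ (-(d : ℝ) / 2) :=
    Real.rpow_le_rpow_of_nonpos (by positivity) (by gcongr)
      (by have := d.cast_nonneg (α := ℝ); linarith)
  have e2 : -u / (2 * s) ≤ -(1 / (2 * s₁)) * u := by
    have : u / (2 * s₁) ≤ u / (2 * s) := by gcongr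
    calc -u / (2 * s) = -(u / (2 * s)) := by ring
      _ ≤ -(u / (2 * s₁)) := by linarith
      _ = _ := by ring
  gcongr

/-- Differentiation of Gaussian averages in time, for functions of linear growth. -/
lemma hasDerivAt_integral_gaussianProfile {g : EuclideanSpace ℝ (Fin d) → ℝ} (hg : Continuous g)
    {K : ℝ} (hK : ∀ y, |g y| ≤ K * (1 + ‖y‖)) {s₀ : ℝ} (hs₀ : 0 < s₀) :
    Integrable (fun y => g y * (1 / 2 * radialLaplacian d (gaussianProfile d s₀) (‖y‖ ^ 2))) ∧
    HasDerivAt (fun s => ∫ y, g y * gaussianProfile d s (‖y‖ ^ 2))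
      (∫ y, g y * (1 / 2 * radialLaplacian d (gaussianProfile d s₀) (‖y‖ ^ 2))) s₀ := by
  have hK0 : 0 ≤ K := by simpa using (abs_nonneg _).trans (hK 0)
  have hcont : ∀ s, Continuous fun y : EuclideanSpace ℝ (Fin d) =>
      gaussianProfile d s (‖y‖ ^ 2) := fun s =>
    (contDiff_gaussianProfile s).continuous.comp (by fun_prop)
  set c := (2 * Real.pi * (s₀ / 2)) ^ (-(d : ℝ) / 2)
  have hc : 0 ≤ c := by positivity
  set b := 1 / (2 * (2 * s₀))
  have hb : 0 < b := by positivity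
  refine hasDerivAt_integral_of_dominated_loc_of_deriv_le
    (F := fun s y => g y * gaussianProfile d s (‖y‖ ^ 2))
    (F' := fun s y => g y * (1 / 2 * radialLaplacian d (gaussianProfile d s) (‖y‖ ^ 2)))
    (s := Set.Ioo (s₀ / 2) (2 * s₀))
    (bound := fun y => (K * c * (1 / 2 * (4 / s₀ ^ 2 + 2 * d / s₀))) *
      ((1 + ‖y‖) ^ 3 * Real.exp (-b * ‖y‖ ^ 2)))
    (Ioo_mem_nhds (by linarith) (by linarith)) (.of_forall fun s => ?_) ?_ ?_ ?_ ?_ ?_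
  · exact (hg.mul (hcont s)).aestronglyMeasurable
  · refine ((integrable_one_add_norm_pow_mul_exp 1 hb).const_mul (K * c)).mono'
      (hg.mul (hcont s₀)).aestronglyMeasurable (.of_forall fun y => ?_)
    rw [norm_mul, Real.norm_eq_abs, Real.norm_of_nonneg (gaussianProfile_pos hs₀ _).le]
    calc _ ≤ K * (1 + ‖y‖) * (c * Real.exp (-b * ‖y‖ ^ 2)) :=
          mul_le_mul (hK y) (gaussianProfile_le (by positivity) (by linarith) (by linarith)
            (by positivity)) (gaussianProfile_pos hs₀ _).le (by positivity)
      _ = _ := by ring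
  · refine Continuous.aestronglyMeasurable ?_
    simp only [radialLaplacian_gaussianProfile]
    have := hcont s₀
    fun_prop
  · refine .of_forall fun y s hs => ?_
    have hs0 : 0 < s := by linarith [hs.1]
    rw [radialLaplacian_gaussianProfile, norm_mul, norm_mul, norm_mul, Real.norm_eq_abs,
      Real.norm_of_nonneg (gaussianProfile_pos hs0 _).le,
      Real.norm_of_nonneg (by norm_num : (0 : ℝ) ≤ 1 / 2)]
    have e1 : ‖‖y‖ ^ 2 / s ^ 2 - d / s‖ ≤ (4 / s₀ ^ 2 + 2 * d / s₀) * (1 + ‖y‖) ^ 2 := by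
      refine (norm_sub_le _ _).trans ?_
      rw [Real.norm_of_nonneg (by positivity), Real.norm_of_nonneg (by positivity), add_mul]
      have hle : s₀ / 2 ≤ s := hs.1.le
      have a1 : ‖y‖ ^ 2 / s ^ 2 ≤ 4 / s₀ ^ 2 * (1 + ‖y‖) ^ 2 := by
        calc ‖y‖ ^ 2 / s ^ 2 ≤ (1 + ‖y‖) ^ 2 / (s₀ / 2) ^ 2 := by
              gcongr
              linarith
          _ = _ := by field_simp; ring
      have a2 : d / s ≤ 2 * d / s₀ * (1 + ‖y‖) ^ 2 := by
        calc (d : ℝ) / s ≤ d / (s₀ / 2) := by gcongr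
          _ = 2 * d / s₀ * 1 := by field_simp
          _ ≤ _ := by
            gcongr
            exact one_le_pow₀ (by linarith [norm_nonneg y])
      linarith
    calc _ ≤ K * (1 + ‖y‖) * (1 / 2 * (c * Real.exp (-b * ‖y‖ ^ 2) *
            ((4 / s₀ ^ 2 + 2 * d / s₀) * (1 + ‖y‖) ^ 2))) := by
          refine mul_le_mul (hK y) ?_ (by have := (gaussianProfile_pos (d := d) hs0 (‖y‖ ^ 2)).le
                                          positivity) (by positivity)
          gcongr
          exact gaussianProfile_le (by positivity) hs.1.le hs.2.le (by positivity)
      _ = _ := by ring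
  · exact (integrable_one_add_norm_pow_mul_exp 3 hb).const_mul _
  · refine .of_forall fun y s hs => ?_
    exact (hasDerivAt_gaussianProfile (by linarith [hs.1]) _).const_mul _

lemma integral_gaussianProfile {s : ℝ} (hs : 0 < s) :
    ∫ y : EuclideanSpace ℝ (Fin d), gaussianProfile d s (‖y‖ ^ 2) = 1 := by
  have h := GaussianFourier.integral_rexp_neg_mul_sq_norm (V := EuclideanSpace ℝ (Fin d))
    (b := 1 / (2 * s)) (by positivity)
  rw [finrank_euclideanSpace_fin] at h
  have e : ∀ y : EuclideanSpace ℝ (Fin d), gaussianProfile d s (‖y‖ ^ 2) =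
      (2 * Real.pi * s) ^ (-(d : ℝ) / 2) * Real.exp (-(1 / (2 * s)) * ‖y‖ ^ 2) := by
    intro y
    rw [gaussianProfile]
    congr 2
    ring
  simp only [e]
  rw [integral_const_mul, h, show Real.pi / (1 / (2 * s)) = 2 * Real.pi * s by field_simp,
    ← Real.rpow_add (by positivity), show -(d : ℝ) / 2 + d / 2 = 0 by ring, Real.rpow_zero]

lemma integral_mul_gaussianProfile_eq (g : EuclideanSpace ℝ (Fin d) → ℝ) {s : ℝ} (hs : 0 < s) :
    ∫ y, g y * gaussianProfile d s (‖y‖ ^ 2) =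
      ∫ z : EuclideanSpace ℝ (Fin d), g (√s • z) * gaussianProfile d 1 (‖z‖ ^ 2) := by
  have h := Measure.integral_comp_smul_of_nonneg (volume : Measure (EuclideanSpace ℝ (Fin d)))
    (fun y => g y * gaussianProfile d s (‖y‖ ^ 2)) (√s) (hR := Real.sqrt_nonneg s)
  have hpow : √s ^ d = s ^ ((d : ℝ) / 2) := by
    rw [Real.sqrt_eq_rpow, ← Real.rpow_natCast, ← Real.rpow_mul hs.le]
    congr 1
    ring
  rw [finrank_euclideanSpace_fin, smul_eq_mul] at h
  have hpos : 0 < √s ^ d := by positivity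
  rw [← mul_right_inj' (inv_ne_zero hpos.ne'), ← h, ← integral_const_mul]
  refine integral_congr_ae (.of_forall fun z => ?_)
  have e : gaussianProfile d s (‖√s • z‖ ^ 2) = (√s ^ d)⁻¹ * gaussianProfile d 1 (‖z‖ ^ 2) := by
    rw [gaussianProfile, gaussianProfile, norm_smul, mul_pow, Real.norm_eq_abs, sq_abs,
      Real.sq_sqrt hs.le, Real.mul_rpow (by positivity) hs.le, hpow, mul_one, neg_div,
      Real.rpow_neg hs.le, mul_one]
    have : -(s * ‖z‖ ^ 2) / (2 * s) = -‖z‖ ^ 2 / 2 := by field_simp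
    rw [this]
    ring
  simp only [e]
  ring

/-- Gaussian averages of a continuous function of linear growth converge to its value. -/
lemma tendsto_integral_gaussianProfile {g : EuclideanSpace ℝ (Fin d) → ℝ} (hg : Continuous g)
    {K : ℝ} (hK : ∀ y, |g y| ≤ K * (1 + ‖y‖)) :
    Tendsto (fun s => ∫ y, g y * gaussianProfile d s (‖y‖ ^ 2)) (𝓝[>] 0) (𝓝 (g 0)) := by
  have hK0 : 0 ≤ K := by simpa using (abs_nonneg _).trans (hK 0)
  have hcont : Continuous fun y : EuclideanSpace ℝ (Fin d) => gaussianProfile d 1 (‖y‖ ^ 2) :=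
    (contDiff_gaussianProfile 1).continuous.comp (by fun_prop)
  have h1 : ∫ z : EuclideanSpace ℝ (Fin d), g 0 * gaussianProfile d 1 (‖z‖ ^ 2) = g 0 := by
    rw [integral_const_mul, integral_gaussianProfile one_pos, mul_one]
  have key : Tendsto (fun s => ∫ z : EuclideanSpace ℝ (Fin d),
      g (√s • z) * gaussianProfile d 1 (‖z‖ ^ 2)) (𝓝[>] 0) (𝓝 (g 0)) := by
    rw [← h1]
    set c := (2 * Real.pi * 1) ^ (-(d : ℝ) / 2)
    refine tendsto_integral_filter_of_dominated_convergence
      (fun z => K * c * ((1 + ‖z‖) ^ 1 * Real.exp (-(1 / (2 * 1)) * ‖z‖ ^ 2))) ?_ ?_ ?_ ?_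
    · exact .of_forall fun s => (by fun_prop : Continuous _).aestronglyMeasurable
    · filter_upwards [Ioo_mem_nhdsGT (one_pos : (0 : ℝ) < 1)] with s hs
      refine .of_forall fun z => ?_
      rw [norm_mul, Real.norm_eq_abs, Real.norm_of_nonneg (gaussianProfile_pos one_pos _).le]
      have e1 : |g (√s • z)| ≤ K * (1 + ‖z‖) := by
        refine (hK _).trans ?_
        gcongr
        rw [norm_smul, Real.norm_of_nonneg (Real.sqrt_nonneg s)]
        exact mul_le_of_le_one_left (norm_nonneg _) (Real.sqrt_le_one.2 hs.2.le)
      calc _ ≤ K * (1 + ‖z‖) * (c * Real.exp (-(1 / (2 * 1)) * ‖z‖ ^ 2)) :=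
            mul_le_mul e1 (gaussianProfile_le one_pos le_rfl le_rfl (by positivity))
              (gaussianProfile_pos one_pos _).le (by positivity)
        _ = _ := by ring
    · exact (integrable_one_add_norm_pow_mul_exp 1 (by norm_num)).const_mul _
    · refine .of_forall fun z => Tendsto.mul_const _ ?_
      have : Tendsto (fun s : ℝ => g (√s • z)) (𝓝 0) (𝓝 (g (√0 • z))) :=
        (by fun_prop : Continuous fun s : ℝ => g (√s • z)).tendsto 0
      simpa using this.mono_left nhdsWithin_le_nhds
  refine key.congr' ?_
  filter_upwards [self_mem_nhdsWithin] with s hs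
  exact (integral_mul_gaussianProfile_eq g hs).symm

end Gaussian

section Cutoff

variable {d : ℕ}

lemma contDiff_radialCutoff : ContDiff ℝ (⊤ : ℕ∞) radialCutoff :=
  Real.smoothTransition.contDiff.comp (contDiff_const.sub contDiff_id)

lemma antitone_radialCutoff : Antitone radialCutoff := fun u v h =>
  Real.smoothTransition.monotone (by linarith)

lemma radialCutoff_nonneg (u : ℝ) : 0 ≤ radialCutoff u := Real.smoothTransition.nonneg _

lemma radialCutoff_le_one (u : ℝ) : radialCutoff u ≤ 1 := Real.smoothTransition.le_one _

lemma radialCutoff_of_le_one {u : ℝ} (hu : u ≤ 1) : radialCutoff u = 1 :=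
  Real.smoothTransition.one_of_one_le (by linarith)

lemma radialCutoff_of_two_le {u : ℝ} (hu : 2 ≤ u) : radialCutoff u = 0 :=
  Real.smoothTransition.zero_of_nonpos (by linarith)

lemma hasCompactSupport_deriv_radialCutoff : HasCompactSupport (deriv radialCutoff) := by
  refine HasCompactSupport.of_support_subset_isCompact (isCompact_Icc (a := (1 : ℝ)) (b := 2))
    fun u hu => ?_
  by_contra h
  rw [Set.mem_Icc, not_and_or, not_le, not_le] at h
  refine hu ?_
  rcases h with h | h
  · have : radialCutoff =ᶠ[𝓝 u] fun _ => 1 := by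
      filter_upwards [Iio_mem_nhds h] with v hv using radialCutoff_of_le_one hv.le
    rw [this.deriv_eq, deriv_const]
  · have : radialCutoff =ᶠ[𝓝 u] fun _ => 0 := by
      filter_upwards [Ioi_mem_nhds h] with v hv using radialCutoff_of_two_le hv.le
    rw [this.deriv_eq, deriv_const]

lemma contDiff_deriv_radialCutoff : ContDiff ℝ (⊤ : ℕ∞) (deriv radialCutoff) :=
  (contDiff_infty_iff_deriv.1 contDiff_radialCutoff).2

lemma exists_bound_deriv_radialCutoff :
    ∃ M, 0 ≤ M ∧ ∀ u, |deriv radialCutoff u| ≤ M ∧ |deriv (deriv radialCutoff) u| ≤ M := by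
  obtain ⟨M₁, h₁⟩ := hasCompactSupport_deriv_radialCutoff.exists_bound_of_continuous
    contDiff_deriv_radialCutoff.continuous
  obtain ⟨M₂, h₂⟩ := hasCompactSupport_deriv_radialCutoff.deriv.exists_bound_of_continuous
    (contDiff_infty_iff_deriv.1 contDiff_deriv_radialCutoff).2.continuous
  exact ⟨max M₁ M₂, (norm_nonneg _).trans ((h₁ 0).trans (le_max_left _ _)), fun u =>
    ⟨(h₁ u).trans (le_max_left _ _), (h₂ u).trans (le_max_right _ _)⟩⟩

/-- The heat kernel profile, smoothly cut off to `{u ≤ 2}`. -/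
noncomputable def truncatedProfile (d : ℕ) (s u : ℝ) : ℝ := radialCutoff u * gaussianProfile d s u

lemma contDiff_truncatedProfile (s : ℝ) : ContDiff ℝ (⊤ : ℕ∞) (truncatedProfile d s) :=
  contDiff_radialCutoff.mul (contDiff_gaussianProfile s)

lemma truncatedProfile_nonneg {s : ℝ} (hs : 0 < s) (u : ℝ) : 0 ≤ truncatedProfile d s u :=
  mul_nonneg (radialCutoff_nonneg u) (gaussianProfile_pos hs u).le

lemma truncatedProfile_eq_zero (s : ℝ) {u : ℝ} (hu : 2 ≤ u) : truncatedProfile d s u = 0 := by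
  rw [truncatedProfile, radialCutoff_of_two_le hu, zero_mul]

lemma antitone_truncatedProfile {s : ℝ} (hs : 0 < s) : Antitone (truncatedProfile d s) := by
  intro u v h
  refine mul_le_mul (antitone_radialCutoff h) ?_ (gaussianProfile_pos hs v).le
    (radialCutoff_nonneg u)
  unfold gaussianProfile
  gcongr

lemma radialLaplacian_truncatedProfile (s u : ℝ) :
    radialLaplacian d (truncatedProfile d s) u = gaussianProfile d s u *
      (4 * u * (deriv (deriv radialCutoff) u - deriv radialCutoff u / s +
        radialCutoff u / (4 * s ^ 2)) +
      2 * d * (deriv radialCutoff u - radialCutoff u / (2 * s))) := by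
  have dχ : ∀ v, HasDerivAt radialCutoff (deriv radialCutoff v) v := fun v =>
    ((contDiff_infty_iff_deriv.1 contDiff_radialCutoff).1 v).hasDerivAt
  have dχ' : ∀ v, HasDerivAt (deriv radialCutoff) (deriv (deriv radialCutoff) v) v := fun v =>
    ((contDiff_infty_iff_deriv.1 contDiff_deriv_radialCutoff).1 v).hasDerivAt
  have dF : ∀ v, HasDerivAt (gaussianProfile d s) (-(1 / (2 * s)) * gaussianProfile d s v) v := by
    intro v
    have := ((contDiff_infty_iff_deriv.1 (contDiff_gaussianProfile (d := d) s)).1 v).hasDerivAt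
    rwa [deriv_gaussianProfile] at this
  have h1 : deriv (truncatedProfile d s) = fun v => deriv radialCutoff v * gaussianProfile d s v +
      radialCutoff v * (-(1 / (2 * s)) * gaussianProfile d s v) :=
    funext fun v => ((dχ v).mul (dF v)).deriv
  have h2 : HasDerivAt (fun v => deriv radialCutoff v * gaussianProfile d s v +
      radialCutoff v * (-(1 / (2 * s)) * gaussianProfile d s v)) _ u :=
    ((dχ' u).mul (dF u)).add ((dχ u).mul ((dF u).const_mul (-(1 / (2 * s)))))
  rw [radialLaplacian, h1, h2.deriv]
  rcases eq_or_ne s 0 with rfl | hs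
  · simp; ring
  · field_simp
    ring

lemma abs_radialLaplacian_sub_truncatedProfile_le (d : ℕ) :
    ∃ C, 0 ≤ C ∧ ∀ s, 0 < s → s ≤ 1 → ∀ u, 0 ≤ u →
      |radialLaplacian d (gaussianProfile d s) u - radialLaplacian d (truncatedProfile d s) u| ≤
        C * (s⁻¹ ^ 2 * gaussianProfile d s (1 / 2)) * ((1 + u) * Real.exp (-(1 / 4) * u)) := by
  obtain ⟨M, hM0, hM⟩ := exists_bound_deriv_radialCutoff
  refine ⟨4 * (2 * M + 1) + 2 * d * (M + 1), by positivity, fun s hs hs1 u hu => ?_⟩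
  have hR : 0 ≤ (4 * (2 * M + 1) + 2 * d * (M + 1)) *
      (s⁻¹ ^ 2 * gaussianProfile d s (1 / 2)) * ((1 + u) * Real.exp (-(1 / 4) * u)) := by
    have := (gaussianProfile_pos (d := d) hs (1 / 2)).le
    positivity
  rcases lt_or_ge u 1 with hu1 | hu1
  · have h : truncatedProfile d s =ᶠ[𝓝 u] gaussianProfile d s := by
      filter_upwards [Iio_mem_nhds hu1] with v hv
      rw [truncatedProfile, radialCutoff_of_le_one hv.le, one_mul]
    rwa [radialLaplacian, radialLaplacian, h.deriv.deriv_eq, h.deriv_eq, sub_self, abs_zero]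
  · have hF : gaussianProfile d s u ≤ gaussianProfile d s (1 / 2) * Real.exp (-(1 / 4) * u) := by
      unfold gaussianProfile
      rw [mul_assoc (_ ^ _), ← Real.exp_add]
      refine mul_le_mul_of_nonneg_left (Real.exp_le_exp.2 ?_) (by positivity)
      rw [div_add' _ _ _ (by positivity), div_le_div_iff_of_pos_right (by positivity)]
      nlinarith
    have hF0 := (gaussianProfile_pos (d := d) hs u).le
    set r := s⁻¹ with hr
    have hr1 : 1 ≤ r := (one_le_inv₀ hs).2 hs1
    have hr2 : r ≤ r ^ 2 := by nlinarith
    have e : radialLaplacian d (gaussianProfile d s) u - radialLaplacian d (truncatedProfile d s) u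
        = gaussianProfile d s u * (4 * u * ((1 - radialCutoff u) / 4 * r ^ 2
          + deriv radialCutoff u * r - deriv (deriv radialCutoff) u)
          + 2 * d * (-((1 - radialCutoff u) / 2 * r) - deriv radialCutoff u)) := by
      rw [radialLaplacian_gaussianProfile, radialLaplacian_truncatedProfile, hr]
      field_simp
      ring
    have hχ0 := radialCutoff_nonneg u
    have hχ1 := radialCutoff_le_one u
    obtain ⟨m1, m2⟩ := hM u
    rw [abs_le] at m1 m2
    have b1 : |(1 - radialCutoff u) / 4 * r ^ 2 + deriv radialCutoff u * r
        - deriv (deriv radialCutoff) u| ≤ (2 * M + 1) * r ^ 2 := by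
      rw [abs_le]
      constructor <;> nlinarith
    have b2 : |-((1 - radialCutoff u) / 2 * r) - deriv radialCutoff u| ≤ (M + 1) * r ^ 2 := by
      rw [abs_le]
      constructor <;> nlinarith
    rw [e, abs_mul, abs_of_nonneg hF0]
    have b3 : |4 * u * ((1 - radialCutoff u) / 4 * r ^ 2
          + deriv radialCutoff u * r - deriv (deriv radialCutoff) u)
          + 2 * d * (-((1 - radialCutoff u) / 2 * r) - deriv radialCutoff u)| ≤
        (4 * (2 * M + 1) + 2 * d * (M + 1)) * r ^ 2 * (1 + u) := by
      refine (abs_add_le _ _).trans ?_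
      rw [abs_mul (4 * u), abs_mul (2 * (d : ℝ)), abs_of_nonneg (by positivity : 0 ≤ 4 * u),
        abs_of_nonneg (by positivity : (0 : ℝ) ≤ 2 * d)]
      calc _ ≤ 4 * u * ((2 * M + 1) * r ^ 2) + 2 * d * ((M + 1) * r ^ 2) := by gcongr
        _ ≤ 4 * (1 + u) * ((2 * M + 1) * r ^ 2) + 2 * d * ((M + 1) * r ^ 2) * (1 + u) := by
          refine add_le_add (by gcongr; linarith) (le_mul_of_one_le_right (by positivity) ?_)
          linarith
        _ = _ := by ring
    calc _ ≤ gaussianProfile d s (1 / 2) * Real.exp (-(1 / 4) * u) *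
          ((4 * (2 * M + 1) + 2 * d * (M + 1)) * r ^ 2 * (1 + u)) :=
          mul_le_mul hF b3 (abs_nonneg _) (hF0.trans hF)
      _ = _ := by ring

lemma tendsto_inv_pow_mul_gaussianProfile (n : ℕ) {δ : ℝ} (hδ : 0 < δ) :
    Tendsto (fun s => s⁻¹ ^ n * gaussianProfile d s δ) (𝓝[>] 0) (𝓝 0) := by
  have h1 := (tendsto_rpow_mul_exp_neg_mul_atTop_nhds_zero (n + (d : ℝ) / 2) (δ / 2)
    (by positivity)).comp tendsto_inv_nhdsGT_zero
  have h2 := h1.const_mul ((2 * Real.pi) ^ (-(d : ℝ) / 2))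
  rw [mul_zero] at h2
  refine h2.congr' ?_
  filter_upwards [self_mem_nhdsWithin] with s (hs : 0 < s)
  have e1 : s⁻¹ ^ (n + (d : ℝ) / 2) = s⁻¹ ^ n * s ^ (-(d : ℝ) / 2) := by
    rw [Real.rpow_add (by positivity), Real.rpow_natCast, Real.inv_rpow hs.le, ← Real.rpow_neg hs.le,
      neg_div]
  simp only [Function.comp_apply, gaussianProfile]
  rw [e1, Real.mul_rpow (by positivity) hs.le,
    show -(δ / 2) * s⁻¹ = -δ / (2 * s) by field_simp]
  ring

lemma tendsto_truncatedProfile {δ : ℝ} (hδ : 0 < δ) :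
    Tendsto (fun s => truncatedProfile d s δ) (𝓝[>] 0) (𝓝 0) := by
  have h := (tendsto_inv_pow_mul_gaussianProfile (d := d) 0 hδ).const_mul (radialCutoff δ)
  simpa [truncatedProfile] using h

end Cutoff

section Limit

variable {d : ℕ}

/-- Cutting off the heat kernel changes the time derivative of Gaussian averages by an amount that
vanishes in the limit. -/
lemma tendsto_integral_radialLaplacian_sub_truncatedProfile
    {g : EuclideanSpace ℝ (Fin d) → ℝ} {K : ℝ} (hK : ∀ y, |g y| ≤ K * (1 + ‖y‖)) :
    Tendsto (fun s => ∫ y, g y * (radialLaplacian d (gaussianProfile d s) (‖y‖ ^ 2) -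
      radialLaplacian d (truncatedProfile d s) (‖y‖ ^ 2))) (𝓝[>] 0) (𝓝 0) := by
  have hK0 : 0 ≤ K := by simpa using (abs_nonneg _).trans (hK 0)
  obtain ⟨C, hC0, hC⟩ := abs_radialLaplacian_sub_truncatedProfile_le d
  set I := ∫ y : EuclideanSpace ℝ (Fin d), (1 + ‖y‖) ^ 3 * Real.exp (-(1 / 4) * ‖y‖ ^ 2)
  have hlim := (tendsto_inv_pow_mul_gaussianProfile (d := d) 2 (δ := 1 / 2)
    (by norm_num)).const_mul (K * C) |>.mul_const I
  rw [mul_zero, zero_mul] at hlim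
  refine squeeze_zero_norm' ?_ hlim
  filter_upwards [Ioc_mem_nhdsGT (zero_lt_one (α := ℝ))] with s hs
  rw [← integral_const_mul]
  refine norm_integral_le_of_norm_le
    ((integrable_one_add_norm_pow_mul_exp 3 (by norm_num)).const_mul _) (.of_forall fun y => ?_)
  have hG := (gaussianProfile_pos (d := d) hs.1 (1 / 2)).le
  have hs0 := hs.1
  rw [norm_mul, Real.norm_eq_abs, Real.norm_eq_abs]
  calc _ ≤ K * (1 + ‖y‖) * (C * (s⁻¹ ^ 2 * gaussianProfile d s (1 / 2)) *
        ((1 + ‖y‖ ^ 2) * Real.exp (-(1 / 4) * ‖y‖ ^ 2))) :=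
        mul_le_mul (hK y) (hC s hs.1 hs.2 _ (by positivity)) (abs_nonneg _) (by positivity)
    _ ≤ K * (1 + ‖y‖) * (C * (s⁻¹ ^ 2 * gaussianProfile d s (1 / 2)) *
        ((1 + ‖y‖) ^ 2 * Real.exp (-(1 / 4) * ‖y‖ ^ 2))) := by
        have : 1 + ‖y‖ ^ 2 ≤ (1 + ‖y‖) ^ 2 := by nlinarith [norm_nonneg y]
        gcongr
    _ = _ := by ring

lemma isCompact_ellipsoid {E : Type*} [NormedAddCommGroup E] [NormedSpace ℝ E]
    [FiniteDimensional ℝ E] (L : E ≃L[ℝ] E) (x : E) (r : ℝ) :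
    IsCompact {z | ‖L.symm (z - x)‖ ^ 2 ≤ r} := by
  have h : {z | ‖L.symm (z - x)‖ ^ 2 ≤ r} ⊆ (fun y => x + L y) '' closedBall 0 √r := by
    intro z hz
    refine ⟨L.symm (z - x), ?_, by simp⟩
    rw [mem_closedBall_zero_iff]
    exact Real.le_sqrt_of_sq_le hz
  exact ((isCompact_closedBall 0 √r).image (by fun_prop)).of_isClosed_subset
    (isClosed_le (by fun_prop) continuous_const) h

/-- At almost every point, the averages of a measure against cut-off Gaussians concentrating at the
point along `L` converge to its density. -/
lemma ae_tendsto_integral_truncatedProfile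
    (L : EuclideanSpace ℝ (Fin d) ≃L[ℝ] EuclideanSpace ℝ (Fin d))
    (μ : Measure (EuclideanSpace ℝ (Fin d))) [IsLocallyFiniteMeasure μ] :
    ∀ᵐ x, Tendsto (fun s => ∫ z, truncatedProfile d s (‖L.symm (z - x)‖ ^ 2) ∂μ) (𝓝[>] 0)
      (𝓝 ((μ.rnDeriv volume x).toReal *
        |LinearMap.det (L : EuclideanSpace ℝ (Fin d) →ₗ[ℝ] EuclideanSpace ℝ (Fin d))|)) := by
  filter_upwards [ae_tendsto_rnDeriv_ellipsoid volume L μ, μ.rnDeriv_ne_top volume] with x hx hq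
  refine tendsto_integral_antitone_of_tendsto_ratio (ν := volume) (R := 2)
    (N := fun z => ‖L.symm (z - x)‖ ^ 2) (by fun_prop) (fun z => by positivity) two_pos
    (isCompact_ellipsoid L x 2).measure_lt_top.ne (isCompact_ellipsoid L x 2).measure_lt_top.ne
    (fun r hr => ?_) hq hx (fun s hs => antitone_truncatedProfile hs)
    (fun s _ => (contDiff_truncatedProfile s).continuous) (fun s hs => truncatedProfile_nonneg hs)
    (fun s _ u hu => truncatedProfile_eq_zero s hu.le) (fun δ hδ => tendsto_truncatedProfile hδ) ?_
  · have hopen : IsOpen {z : EuclideanSpace ℝ (Fin d) | ‖L.symm (z - x)‖ ^ 2 < r} :=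
      isOpen_lt (by fun_prop) continuous_const
    have hpos := hopen.measure_pos volume ⟨x, by simpa using hr⟩
    exact (hpos.trans_le (measure_mono fun z (hz : _ < r) => hz.le)).ne'
  · have hcont : Continuous fun y : EuclideanSpace ℝ (Fin d) => radialCutoff (‖y‖ ^ 2) :=
      contDiff_radialCutoff.continuous.comp (by fun_prop)
    have h := tendsto_integral_gaussianProfile hcont (K := 1) fun y => by
      rw [abs_of_nonneg (radialCutoff_nonneg _)]
      linarith [radialCutoff_le_one (‖y‖ ^ 2), norm_nonneg y]
    have h2 := h.const_mul
      |LinearMap.det (L : EuclideanSpace ℝ (Fin d) →ₗ[ℝ] EuclideanSpace ℝ (Fin d))|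
    rw [radialCutoff_of_le_one (by simp), mul_one] at h2
    refine h2.congr fun s => ?_
    have h3 := integral_comp_affine volume L x fun z => truncatedProfile d s (‖L.symm (z - x)‖ ^ 2)
    simp only [add_sub_cancel_left, ContinuousLinearEquiv.symm_apply_apply] at h3
    exact h3.symm

lemma contDiff_radial_comp {F : ℝ → ℝ} (hF : ContDiff ℝ (⊤ : ℕ∞) F)
    (L : EuclideanSpace ℝ (Fin d) ≃L[ℝ] EuclideanSpace ℝ (Fin d)) (x : EuclideanSpace ℝ (Fin d)) :
    ContDiff ℝ (⊤ : ℕ∞) fun z => F (‖L.symm (z - x)‖ ^ 2) :=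
  hF.comp ((L.symm.contDiff.comp (contDiff_id.sub contDiff_const)).norm_sq ℝ)

lemma hasCompactSupport_radial_comp {F : ℝ → ℝ} {R : ℝ} (hR : ∀ u, R ≤ u → F u = 0)
    (L : EuclideanSpace ℝ (Fin d) ≃L[ℝ] EuclideanSpace ℝ (Fin d)) (x : EuclideanSpace ℝ (Fin d)) :
    HasCompactSupport fun z => F (‖L.symm (z - x)‖ ^ 2) := by
  refine HasCompactSupport.of_support_subset_isCompact (isCompact_ellipsoid L x R) fun z hz => ?_
  by_contra h
  exact hz (hR _ (not_le.1 h).le)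

lemma continuous_secondPartial {φ : EuclideanSpace ℝ (Fin d) → ℝ} (hφ : ContDiff ℝ (⊤ : ℕ∞) φ)
    (i j : Fin d) : Continuous (secondPartial d φ i j) := by
  have h1 : ContDiff ℝ 1 fun z => fderiv ℝ φ z (EuclideanSpace.single j 1) :=
    (hφ.fderiv_right (m := 1) (by norm_cast)).clm_apply contDiff_const
  exact (h1.continuous_fderiv one_ne_zero).clm_apply continuous_const

lemma hasCompactSupport_secondPartial {φ : EuclideanSpace ℝ (Fin d) → ℝ}
    (hφ : HasCompactSupport φ) (i j : Fin d) : HasCompactSupport (secondPartial d φ i j) :=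
  (hφ.fderiv_apply ℝ _).fderiv_apply ℝ _

/-- Testing the second derivative measures against a radial function in the coordinates given by
`L` produces its Laplacian. -/
lemma sum_second_deriv_measure_radial {f : EuclideanSpace ℝ (Fin d) → ℝ} (hf : Continuous f)
    {μp μn : Fin d → Fin d → Measure (EuclideanSpace ℝ (Fin d))}
    (hμ : IsSecondDerivMeasures d f μp μn)
    (L : EuclideanSpace ℝ (Fin d) ≃L[ℝ] EuclideanSpace ℝ (Fin d)) (x : EuclideanSpace ℝ (Fin d))
    {F : ℝ → ℝ} (hF : ContDiff ℝ (⊤ : ℕ∞) F) {R : ℝ} (hR : ∀ u, R ≤ u → F u = 0) :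
    ∑ i, ∑ j, (∑ k, L (EuclideanSpace.single k 1) i * L (EuclideanSpace.single k 1) j) *
        ((∫ z, F (‖L.symm (z - x)‖ ^ 2) ∂(μp i j)) - ∫ z, F (‖L.symm (z - x)‖ ^ 2) ∂(μn i j)) =
      |LinearMap.det (L : EuclideanSpace ℝ (Fin d) →ₗ[ℝ] EuclideanSpace ℝ (Fin d))| *
        ∫ y, f (x + L y) * radialLaplacian d F (‖y‖ ^ 2) := by
  have hφ := contDiff_radial_comp hF L x
  have hc := hasCompactSupport_radial_comp hR L x
  have hint : ∀ i j, Integrable fun z =>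
      (∑ k, L (EuclideanSpace.single k 1) i * L (EuclideanSpace.single k 1) j) *
        (f z * secondPartial d (fun z => F (‖L.symm (z - x)‖ ^ 2)) i j z) := fun i j =>
    ((hf.mul (continuous_secondPartial hφ i j)).integrable_of_hasCompactSupport
      (hasCompactSupport_secondPartial hc i j).mul_left).const_mul _
  have h1 : ∫ z, f z * radialLaplacian d F (‖L.symm (z - x)‖ ^ 2) =
      ∑ i, ∑ j, (∑ k, L (EuclideanSpace.single k 1) i * L (EuclideanSpace.single k 1) j) *
        ∫ z, f z * secondPartial d (fun z => F (‖L.symm (z - x)‖ ^ 2)) i j z := by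
    simp_rw [← integral_const_mul]
    rw [← Finset.sum_congr rfl fun i _ => integral_finsetSum Finset.univ fun j _ => hint i j,
      ← integral_finsetSum _ fun i _ => integrable_finsetSum _ fun j _ => hint i j]
    refine integral_congr_ae (.of_forall fun z => ?_)
    simp only
    rw [← sum_secondPartial_radial hF L x z, Finset.mul_sum]
    refine Finset.sum_congr rfl fun i _ => ?_
    rw [Finset.mul_sum]
    exact Finset.sum_congr rfl fun j _ => mul_left_comm _ _ _
  have h2 := integral_comp_affine volume L x
    fun z => f z * radialLaplacian d F (‖L.symm (z - x)‖ ^ 2)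
  simp only [add_sub_cancel_left, ContinuousLinearEquiv.symm_apply_apply] at h2
  rw [← h2, h1]
  exact Finset.sum_congr rfl fun i _ => Finset.sum_congr rfl fun j _ =>
    congrArg _ (hμ.2.2 i j _ hφ hc)

end Limit

section Average

variable {d : ℕ}

lemma tendsto_deriv_gaussian_average {f : EuclideanSpace ℝ (Fin d) → ℝ}
    {μp μn : Fin d → Fin d → Measure (EuclideanSpace ℝ (Fin d))}
    (hf : Continuous f) (hμ : IsSecondDerivMeasures d f μp μn)
    (L : EuclideanSpace ℝ (Fin d) ≃L[ℝ] EuclideanSpace ℝ (Fin d)) {x : EuclideanSpace ℝ (Fin d)}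
    {K : ℝ} (hK : ∀ y, |f (x + L y)| ≤ K * (1 + ‖y‖)) {q : Matrix (Fin d) (Fin d) ℝ}
    (hq : ∀ i j, Tendsto (fun s => (∫ z, truncatedProfile d s (‖L.symm (z - x)‖ ^ 2) ∂(μp i j)) -
      ∫ z, truncatedProfile d s (‖L.symm (z - x)‖ ^ 2) ∂(μn i j)) (𝓝[>] 0) (𝓝 (q i j *
        |LinearMap.det (L : EuclideanSpace ℝ (Fin d) →ₗ[ℝ] EuclideanSpace ℝ (Fin d))|))) :
    Tendsto (fun s => ∫ y, f (x + L y) *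
        (1 / 2 * radialLaplacian d (gaussianProfile d s) (‖y‖ ^ 2))) (𝓝[>] 0)
      (𝓝 (1 / 2 * ∑ i, ∑ j,
        (∑ k, L (EuclideanSpace.single k 1) i * L (EuclideanSpace.single k 1) j) * q i j)) := by
  set D := |LinearMap.det (L : EuclideanSpace ℝ (Fin d) →ₗ[ℝ] EuclideanSpace ℝ (Fin d))|
  have hD : D ≠ 0 := abs_ne_zero.2 (LinearEquiv.isUnit_det' L.toLinearEquiv).ne_zero
  have hg : Continuous fun y => f (x + L y) := by fun_prop
  have h1 : Tendsto (fun s => ∫ y, f (x + L y) *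
      radialLaplacian d (truncatedProfile d s) (‖y‖ ^ 2)) (𝓝[>] 0) (𝓝 (∑ i, ∑ j,
        (∑ k, L (EuclideanSpace.single k 1) i * L (EuclideanSpace.single k 1) j) * q i j)) := by
    have h2 := (tendsto_finsetSum Finset.univ fun i _ => tendsto_finsetSum Finset.univ fun j _ =>
      (hq i j).const_mul
        (∑ k, L (EuclideanSpace.single k 1) i * L (EuclideanSpace.single k 1) j)).const_mul D⁻¹
    convert h2 using 2 with s
    · rw [sum_second_deriv_measure_radial hf hμ L x (contDiff_truncatedProfile s)
        (fun u => truncatedProfile_eq_zero s), inv_mul_cancel_left₀ hD]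
    · simp_rw [← mul_assoc, ← Finset.sum_mul]
      rw [mul_comm, mul_inv_cancel_right₀ hD]
  have h3 := ((tendsto_integral_radialLaplacian_sub_truncatedProfile hK).add h1).const_mul (1 / 2)
  rw [zero_add] at h3
  refine h3.congr' ?_
  filter_upwards [self_mem_nhdsWithin] with s (hs : 0 < s)
  have hi : Integrable fun y => f (x + L y) *
      radialLaplacian d (gaussianProfile d s) (‖y‖ ^ 2) := by
    refine ((hasDerivAt_integral_gaussianProfile hg hK hs).1.const_mul 2).congr
      (.of_forall fun y => ?_)
    simp only
    ring
  have hi' : Integrable fun y => f (x + L y) *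
      radialLaplacian d (truncatedProfile d s) (‖y‖ ^ 2) := by
    have hk := contDiff_truncatedProfile (d := d) s
    have hk' := (contDiff_infty_iff_deriv.1 hk).2
    have hk'' := (contDiff_infty_iff_deriv.1 hk').2.continuous
    have hk' := hk'.continuous
    have hL : Continuous fun y : EuclideanSpace ℝ (Fin d) =>
        radialLaplacian d (truncatedProfile d s) (‖y‖ ^ 2) := by
      unfold radialLaplacian
      fun_prop
    refine (hg.mul hL).integrable_of_hasCompactSupport (HasCompactSupport.mul_left ?_)
    refine HasCompactSupport.of_support_subset_isCompact
      (isCompact_closedBall (0 : EuclideanSpace ℝ (Fin d)) 2) fun y hy => ?_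
    by_contra h
    rw [mem_closedBall_zero_iff, not_le] at h
    have h0 : truncatedProfile d s =ᶠ[𝓝 (‖y‖ ^ 2)] fun _ => 0 := by
      filter_upwards [Ioi_mem_nhds (show 2 < ‖y‖ ^ 2 by nlinarith)] with v hv
        using truncatedProfile_eq_zero s hv.le
    refine hy ?_
    simp only [radialLaplacian]
    rw [h0.deriv.deriv_eq, h0.deriv_eq]
    simp
  simp_rw [mul_sub]
  rw [integral_sub hi hi', sub_add_cancel, ← integral_const_mul]
  exact integral_congr_ae (.of_forall fun y => mul_left_comm _ _ _)

lemma tendsto_slope_gaussian_average {g : EuclideanSpace ℝ (Fin d) → ℝ} (hg : Continuous g)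
    {K : ℝ} (hK : ∀ y, |g y| ≤ K * (1 + ‖y‖)) {l : ℝ}
    (hl : Tendsto (fun s => ∫ y, g y * (1 / 2 * radialLaplacian d (gaussianProfile d s) (‖y‖ ^ 2)))
      (𝓝[>] 0) (𝓝 l)) :
    Tendsto (fun t => 1 / t * ((∫ y, g y * gaussianProfile d t (‖y‖ ^ 2)) - g 0))
      (𝓝[>] 0) (𝓝 l) := by
  set u : ℝ → ℝ := Function.update (fun s => ∫ y, g y * gaussianProfile d s (‖y‖ ^ 2)) 0 (g 0)
    with hu
  have hder : ∀ s, 0 < s → HasDerivAt u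
      (∫ y, g y * (1 / 2 * radialLaplacian d (gaussianProfile d s) (‖y‖ ^ 2))) s := by
    intro s hs
    refine (hasDerivAt_integral_gaussianProfile hg hK hs).2.congr_of_eventuallyEq ?_
    filter_upwards [Ioi_mem_nhds hs] with v hv
    exact Function.update_of_ne (ne_of_gt hv) _ _
  have h := hasDerivWithinAt_Ici_of_tendsto_deriv (s := Set.Ioi 0) (f := u) (a := 0) (e := l)
    (fun s hs => (hder s hs).differentiableAt.differentiableWithinAt)
    (by
      have h1 := tendsto_integral_gaussianProfile hg hK
      rw [ContinuousWithinAt, hu, Function.update_self]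
      refine h1.congr' ?_
      filter_upwards [self_mem_nhdsWithin] with v (hv : 0 < v)
      rw [Function.update_of_ne hv.ne'])
    self_mem_nhdsWithin
    (hl.congr' (by
      filter_upwards [self_mem_nhdsWithin] with v (hv : 0 < v) using (hder v hv).deriv.symm))
  have h2 := hasDerivWithinAt_iff_tendsto_slope.1 h
  rw [Set.Ici_sdiff_left] at h2
  refine h2.congr' ?_
  filter_upwards [self_mem_nhdsWithin] with v (hv : 0 < v)
  rw [slope_def_field, hu, Function.update_self, Function.update_of_ne hv.ne', sub_zero]
  ring

lemma exists_continuousLinearEquiv_mulVec {S : Matrix (Fin d) (Fin d) ℝ} (hS : IsUnit S.det) :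
    ∃ L : EuclideanSpace ℝ (Fin d) ≃L[ℝ] EuclideanSpace ℝ (Fin d),
      ∀ y, L y = WithLp.toLp 2 (S.mulVec y.ofLp) := by
  refine ⟨(LinearEquiv.ofLinearMap (Matrix.toEuclideanLin S) (Matrix.toEuclideanLin S⁻¹)
    ?_ ?_).toContinuousLinearEquiv, fun y => rfl⟩
  · ext1 y
    simp [Matrix.toLpLin_apply, Matrix.mulVec_mulVec, Matrix.mul_nonsing_inv S hS]
  · ext1 y
    simp [Matrix.toLpLin_apply, Matrix.mulVec_mulVec, Matrix.nonsing_inv_mul S hS]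

lemma trace_transpose_mul_mul_self (S q : Matrix (Fin d) (Fin d) ℝ) :
    (S.transpose * q * S).trace = ∑ i, ∑ j, (∑ k, S i k * S j k) * q i j := by
  simp only [Matrix.trace, Matrix.diag, Matrix.mul_apply, Matrix.transpose_apply, Finset.sum_mul]
  rw [Finset.sum_comm]
  refine (Finset.sum_congr rfl fun j _ => Finset.sum_comm).trans (Finset.sum_comm.trans ?_)
  exact Finset.sum_congr rfl fun i _ => Finset.sum_congr rfl fun j _ =>
    Finset.sum_congr rfl fun k _ => mul_right_comm _ _ _

end Average

theorem transformed_increment_average_tendsto_half_trace (d : ℕ)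
    (f : EuclideanSpace ℝ (Fin d) → ℝ) (hf : ConvexOn ℝ Set.univ f)
    (A B : ℝ) (hgrowth : ∀ y, |f y| ≤ A * ‖y‖ + B)
    (S : Matrix (Fin d) (Fin d) ℝ) (hS : IsUnit S.det)
    (μp μn : Fin d → Fin d → Measure (EuclideanSpace ℝ (Fin d)))
    (hμ : IsSecondDerivMeasures d f μp μn) :
    ∀ᵐ x ∂(volume : Measure (EuclideanSpace ℝ (Fin d))),
      Filter.Tendsto
        (fun t : ℝ => (1 / t) *
          ((∫ y, f (x + (show EuclideanSpace ℝ (Fin d) from WithLp.toLp 2 (S.mulVec y))) * heatKernel d t (WithLp.toLp 2 y)) - f x))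
        (nhdsWithin 0 (Set.Ioi 0))
        (nhds ((1 / 2) *
          Matrix.trace (S.transpose * densityMatrix d μp μn x * S))) := by
  have hfc : Continuous f := hf.locallyLipschitz.continuous
  have hp := hμ.1
  have hn := hμ.2.1
  obtain ⟨L, hL⟩ := exists_continuousLinearEquiv_mulVec hS
  filter_upwards [ae_all_iff.2 fun i => ae_all_iff.2 fun j =>
      ae_tendsto_integral_truncatedProfile L (μp i j),
    ae_all_iff.2 fun i => ae_all_iff.2 fun j =>
      ae_tendsto_integral_truncatedProfile L (μn i j)] with x hxp hxn
  set M := ‖(L : EuclideanSpace ℝ (Fin d) →L[ℝ] EuclideanSpace ℝ (Fin d))‖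
  have hM : 0 ≤ M := norm_nonneg _
  have hK : ∀ y, |f (x + L y)| ≤
      (|A| * ‖x‖ + |B| + |A| * M) * (1 + ‖y‖) := by
    intro y
    have h1 : ‖x + L y‖ ≤ ‖x‖ + M * ‖y‖ :=
      (norm_add_le _ _).trans (add_le_add_right (ContinuousLinearMap.le_opNorm
        (L : EuclideanSpace ℝ (Fin d) →L[ℝ] EuclideanSpace ℝ (Fin d)) y) _)
    calc |f (x + L y)| ≤ A * ‖x + L y‖ + B := hgrowth _
      _ ≤ |A| * (‖x‖ + M * ‖y‖) + |B| := by
        gcongr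
        · exact le_abs_self A
        · exact le_abs_self B
      _ ≤ _ := by
        have h2 : 0 ≤ (|A| * ‖x‖ + |B|) * ‖y‖ := by positivity
        have h3 : 0 ≤ |A| * M := by positivity
        linarith
  have hq : ∀ i j, Tendsto (fun s =>
      (∫ z, truncatedProfile d s (‖L.symm (z - x)‖ ^ 2) ∂(μp i j)) -
        ∫ z, truncatedProfile d s (‖L.symm (z - x)‖ ^ 2) ∂(μn i j)) (𝓝[>] 0)
      (𝓝 (densityMatrix d μp μn x i j *
        |LinearMap.det (L : EuclideanSpace ℝ (Fin d) →ₗ[ℝ] EuclideanSpace ℝ (Fin d))|)) := by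
    intro i j
    rw [densityMatrix, Matrix.of_apply, sub_mul]
    exact (hxp i j).sub (hxn i j)
  have hg : Continuous fun y => f (x + L y) := by fun_prop
  have key := tendsto_slope_gaussian_average hg hK
    (tendsto_deriv_gaussian_average hfc hμ L hK hq)
  have hLS : ∀ i k, L (EuclideanSpace.single k 1) i = S i k := by
    intro i k
    rw [hL]
    simp
  simp only [hLS, ← trace_transpose_mul_mul_self, map_zero, add_zero] at key
  refine key.congr fun t => ?_
  congr 2
  rw [← (PiLp.volume_preserving_toLp (Fin d)).integral_comp
    (MeasurableEquiv.toLp 2 _).measurableEmbedding]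
  refine integral_congr_ae (.of_forall fun y => ?_)
  simp only [hL]
  rfl
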